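/- For $n \ge 2$, $R > 0$, and $1 < p < 1 + \frac{1}{n-1}$, for every $x' \in \mathbb{R}^n$ with $|x'| < 2R$ and every bounded measurable $V_\delta \subset \mathbb{R}^n$, we have $\int_{V_\delta} \int_{R\hat v + \Pi_v(R)} \Big(\int_0^{2R} \frac{dt}{|x - x' - t\hat v|^{n-1}}\Big)^p dx\, dv \le (2R)^{p/p'}\, \mathrm{Vol}(V_\delta)\, \mathrm{Vol}(\mathbb{S}^{n-1})\, \frac{(4R)^{n - (n-1)p}}{n - (n-1)p}$, where $1/p + 1/p' = 1$. -/

import Mathlib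

open MeasureTheory intervalIntegral
open scoped RealInnerProductSpace

noncomputable section

def hat {n : ℕ} (v : EuclideanSpace ℝ (Fin n)) : EuclideanSpace ℝ (Fin n) := ‖v‖⁻¹ • v

/-!
Put `f z = |z - x'| ^ (-(n - 1))`, so the innermost integral is that of `f (x - t v̂)` over a
segment of length `2R`. Hölder's inequality on this segment moves the exponent `p` onto `f` at the
cost of a factor `(2R) ^ (p - 1)`. For fixed `v`, the map `(x, t) ↦ x - t v̂` sends the disc times
the segment injectively and volume-preservingly into the ball of radius `2R` about the origin. Among
all sets of a given volume, the integral of the radially decreasing function `f ^ p` is largest over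
the ball centred at `x'`, so it suffices to integrate `|z| ^ (-(n - 1)p)` over
the ball of radius `2R` about the origin. Polar coordinates evaluate that integral, which is finite
because `(n - 1)p < n`.
-/

open Metric Module NormedSpace Set
open scoped ENNReal

theorem hat_eq_normalize {n : ℕ} (v : EuclideanSpace ℝ (Fin n)) : hat v = normalize v := rfl

theorem sub_one_mul_lt_of_lt_one_add_one_div {x p : ℝ} (hx : 1 < x) (hp : p < 1 + 1 / (x - 1)) :
    (x - 1) * p < x := by
  have hx' : 0 < x - 1 := sub_pos.2 hx
  calc (x - 1) * p < (x - 1) * (1 + 1 / (x - 1)) := by gcongr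
    _ = x := by field_simp; ring

theorem one_div_pow_pred_eq_rpow_neg {n : ℕ} (hn : 0 < n) {r : ℝ} (hr : 0 ≤ r) :
    1 / r ^ (n - 1) = r ^ (-(n - 1 : ℝ)) := by
  rw [Real.rpow_neg hr, ← Nat.cast_pred hn, Real.rpow_natCast, one_div]

-- For `r < 0` the real power `0 ^ r` is `0`, whereas `(0 : ℝ≥0∞) ^ r = ∞`: passing to `ℝ≥0∞` makes
-- the singular kernel antitone up to the origin.
theorem enorm_rpow_le_rpow_enorm (x r : ℝ) : ‖x ^ r‖ₑ ≤ ‖x‖ₑ ^ r := by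
  rcases eq_or_ne x 0 with rfl | hx
  · rcases lt_trichotomy r 0 with hr | rfl | hr
    · simp [hr]
    · simp
    · simp [hr.ne']
  · rw [← ofReal_norm, ← ofReal_norm, ENNReal.ofReal_rpow_of_pos (norm_pos_iff.2 hx)]
    exact ENNReal.ofReal_le_ofReal (Real.abs_rpow_le_abs_rpow x r)

theorem antitone_ennreal_rpow_of_nonpos {s : ℝ} (hs : s ≤ 0) :
    Antitone fun x : ℝ≥0∞ ↦ x ^ s := by
  intro x y hxy
  have h : x ^ (-s) ≤ y ^ (-s) := ENNReal.rpow_le_rpow hxy (neg_nonneg.2 hs)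
  simpa [ENNReal.rpow_neg] using h

section Lebesgue

variable {α : Type*} [MeasurableSpace α] {μ : Measure α}

theorem rpow_lintegral_le_measure_univ_rpow_mul_lintegral_rpow {p : ℝ} (hp : 1 ≤ p)
    {f : α → ℝ≥0∞} (hf : AEMeasurable f μ) :
    (∫⁻ x, f x ∂μ) ^ p ≤ μ univ ^ (p - 1) * ∫⁻ x, f x ^ p ∂μ := by
  have hp0 : 0 < p := by linarith
  have h := eLpNorm'_le_eLpNorm'_mul_rpow_measure_univ one_pos hp hf.aestronglyMeasurable
  simp only [eLpNorm'_eq_lintegral_enorm, enorm_eq_self, ENNReal.rpow_one, div_one] at h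
  calc (∫⁻ x, f x ∂μ) ^ p
      ≤ ((∫⁻ x, f x ^ p ∂μ) ^ (1 / p) * μ univ ^ (1 - 1 / p)) ^ p := by gcongr
    _ = μ univ ^ (p - 1) * ∫⁻ x, f x ^ p ∂μ := by
      rw [ENNReal.mul_rpow_of_nonneg _ _ hp0.le, ← ENNReal.rpow_mul, ← ENNReal.rpow_mul,
        one_div_mul_cancel hp0.ne', ENNReal.rpow_one, sub_mul, one_div_mul_cancel hp0.ne', one_mul,
        mul_comm]

-- The bathtub principle, for `s` playing the role of a superlevel set of `f`.
theorem setLIntegral_le_setLIntegral_of_measure_le {f : α → ℝ≥0∞} {s t : Set α} {c : ℝ≥0∞}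
    (hs : MeasurableSet s) (ht : MeasurableSet t) (hμs : μ s ≠ ∞) (hμ : μ t ≤ μ s)
    (hfs : ∀ x ∈ s, c ≤ f x) (hft : ∀ x ∉ s, f x ≤ c) :
    ∫⁻ x in t, f x ∂μ ≤ ∫⁻ x in s, f x ∂μ := by
  have hdiff : μ (t \ s) ≤ μ (s \ t) := by
    have hst : μ (t ∩ s) ≠ ∞ := measure_ne_top_of_subset inter_subset_right hμs
    rw [← ENNReal.add_le_add_iff_left hst, measure_inter_add_sdiff t hs, inter_comm,
      measure_inter_add_sdiff s ht]
    exact hμ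
  calc ∫⁻ x in t, f x ∂μ = ∫⁻ x in s ∩ t, f x ∂μ + ∫⁻ x in t \ s, f x ∂μ := by
        rw [inter_comm, lintegral_inter_add_sdiff f t hs]
    _ ≤ ∫⁻ x in s ∩ t, f x ∂μ + c * μ (t \ s) := by
        rw [← setLIntegral_const]
        exact add_le_add_right (setLIntegral_mono' (ht.diff hs) fun x hx ↦ hft x hx.2) _
    _ ≤ ∫⁻ x in s ∩ t, f x ∂μ + c * μ (s \ t) := by gcongr
    _ ≤ ∫⁻ x in s ∩ t, f x ∂μ + ∫⁻ x in s \ t, f x ∂μ := by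
        rw [← setLIntegral_const]
        exact add_le_add_right (setLIntegral_mono' (hs.diff ht) fun x hx ↦ hfs x hx.1) _
    _ = ∫⁻ x in s, f x ∂μ := lintegral_inter_add_sdiff f s ht

theorem enorm_intervalIntegral_le_lintegral_enorm {F : Type*} [NormedAddCommGroup F]
    [NormedSpace ℝ F] {a b : ℝ} (hab : a ≤ b) (f : ℝ → F) :
    ‖∫ t in a..b, f t‖ₑ ≤ ∫⁻ t in Ioc a b, ‖f t‖ₑ := by
  rw [integral_of_le hab]
  exact enorm_integral_le_lintegral_enorm f

end Lebesgue

section Radial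

variable {E : Type*} [NormedAddCommGroup E] [MeasurableSpace E] [BorelSpace E] {μ : Measure E}

theorem setLIntegral_enorm_sub_le_ball_of_antitone {φ : ℝ≥0∞ → ℝ≥0∞} (hφ : Antitone φ) {s : Set E}
    (hs : MeasurableSet s) {c : E} {r : ℝ} (hfin : μ (ball c r) ≠ ∞) (hμ : μ s ≤ μ (ball c r)) :
    ∫⁻ z in s, φ ‖z - c‖ₑ ∂μ ≤ ∫⁻ z in ball c r, φ ‖z - c‖ₑ ∂μ := by
  refine setLIntegral_le_setLIntegral_of_measure_le (c := φ (ENNReal.ofReal r))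
    measurableSet_ball hs hfin hμ (fun z hz ↦ hφ ?_) fun z hz ↦ hφ ?_
  · rw [← ofReal_norm, ← dist_eq_norm]
    exact ENNReal.ofReal_le_ofReal (mem_ball.1 hz).le
  · rw [← ofReal_norm, ← dist_eq_norm]
    exact ENNReal.ofReal_le_ofReal (not_lt.1 hz)

variable [NormedSpace ℝ E] [FiniteDimensional ℝ E]

theorem setLIntegral_ball_enorm_sub_rpow_le (μ : Measure E) [μ.IsAddHaarMeasure] {s : ℝ}
    (hs : s ≤ 0) (x c : E) (R : ℝ) :
    ∫⁻ z in ball x R, ‖z - c‖ₑ ^ s ∂μ ≤ ∫⁻ z in ball 0 R, ‖z‖ₑ ^ s ∂μ := by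
  have hμ : μ (ball x R) ≤ μ (ball c R) := by
    rw [μ.addHaar_ball_center x, μ.addHaar_ball_center c]
  have hpreimage : (· - c) ⁻¹' ball 0 R = ball c R := by
    ext z
    simp [dist_eq_norm]
  calc ∫⁻ z in ball x R, ‖z - c‖ₑ ^ s ∂μ
      ≤ ∫⁻ z in ball c R, ‖z - c‖ₑ ^ s ∂μ :=
        setLIntegral_enorm_sub_le_ball_of_antitone (antitone_ennreal_rpow_of_nonpos hs)
          measurableSet_ball measure_ball_lt_top.ne hμ
    _ = ∫⁻ z in ball 0 R, ‖z‖ₑ ^ s ∂μ := by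
        rw [← hpreimage]
        exact (measurePreserving_sub_right μ c).setLIntegral_comp_preimage
          measurableSet_ball (f := fun z ↦ ‖z‖ₑ ^ s) (by fun_prop)

variable [Nontrivial E]

theorem lintegral_fun_norm_addHaar (μ : Measure E) [μ.IsAddHaarMeasure] {f : ℝ → ℝ≥0∞}
    (hf : Measurable f) :
    ∫⁻ x, f ‖x‖ ∂μ = finrank ℝ E * μ (ball 0 1) *
      ∫⁻ r in Ioi (0 : ℝ), ENNReal.ofReal (r ^ (finrank ℝ E - 1)) * f r := by
  have hw : Measurable fun r : Ioi (0 : ℝ) ↦ ENNReal.ofReal (r.1 ^ (finrank ℝ E - 1)) := by fun_prop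
  calc ∫⁻ x, f ‖x‖ ∂μ = ∫⁻ x : ({0}ᶜ : Set E), f ‖x.1‖ ∂(μ.comap (↑)) := by
        rw [lintegral_subtype_comap (measurableSet_singleton _).compl fun x ↦ f ‖x‖,
          restrict_compl_singleton]
    _ = ∫⁻ x, f x.2 ∂μ.toSphere.prod (.volumeIoiPow (finrank ℝ E - 1)) := by
        simpa using μ.measurePreserving_homeomorphUnitSphereProd.lintegral_comp
          (f := fun x ↦ f x.2) (by fun_prop)
    _ = μ.toSphere univ * ∫⁻ r : Ioi (0 : ℝ), f r ∂.volumeIoiPow (finrank ℝ E - 1) := by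
        simpa using lintegral_prod_mul (μ := μ.toSphere) (ν := .volumeIoiPow (finrank ℝ E - 1))
          (f := 1) (g := fun r ↦ f r.1) (by fun_prop) (by fun_prop)
    _ = _ := by
        rw [μ.toSphere_apply_univ, Measure.volumeIoiPow,
          lintegral_withDensity_eq_lintegral_mul _ hw (by fun_prop)]
        congr 1
        exact lintegral_subtype_comap measurableSet_Ioi
          fun r ↦ ENNReal.ofReal (r ^ (finrank ℝ E - 1)) * f r

theorem setLIntegral_Ioo_ofReal_rpow {s R : ℝ} (hs : -1 < s) (hR : 0 < R) :
    ∫⁻ r in Ioo 0 R, ENNReal.ofReal (r ^ s) = ENNReal.ofReal (R ^ (s + 1) / (s + 1)) := by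
  have hint : IntegrableOn (fun r : ℝ ↦ r ^ s) (Ioo 0 R) :=
    (integrableOn_Ioo_rpow_iff hR).2 hs
  rw [← ofReal_integral_eq_lintegral_ofReal hint, ← integral_Ioc_eq_integral_Ioo,
    ← integral_of_le hR.le, integral_rpow (.inl hs), Real.zero_rpow (by linarith), sub_zero]
  exact ae_restrict_of_forall_mem measurableSet_Ioo fun r hr ↦ Real.rpow_nonneg hr.1.le s

theorem setLIntegral_ball_enorm_rpow (μ : Measure E) [μ.IsAddHaarMeasure] {s R : ℝ}
    (hs : -(finrank ℝ E : ℝ) < s) (hR : 0 < R) :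
    ∫⁻ z in ball 0 R, ‖z‖ₑ ^ s ∂μ = finrank ℝ E * μ (ball 0 1) *
      ENNReal.ofReal (R ^ (finrank ℝ E + s) / (finrank ℝ E + s)) := by
  have hpow : ∀ r ∈ Ioo 0 R, ENNReal.ofReal (r ^ (finrank ℝ E - 1)) * ENNReal.ofReal r ^ s =
      ENNReal.ofReal (r ^ (finrank ℝ E + s - 1)) := by
    intro r ⟨hr, _⟩
    rw [ENNReal.ofReal_rpow_of_pos hr, ← ENNReal.ofReal_mul (by positivity), ← Real.rpow_natCast,
      ← Real.rpow_add hr, Nat.cast_pred finrank_pos, sub_add_eq_add_sub]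
  calc ∫⁻ z in ball 0 R, ‖z‖ₑ ^ s ∂μ
      = ∫⁻ z, (Iio R).indicator (fun r ↦ ENNReal.ofReal r ^ s) ‖z‖ ∂μ := by
        rw [← lintegral_indicator measurableSet_ball]
        simp [indicator]
    _ = finrank ℝ E * μ (ball 0 1) * ∫⁻ r in Ioi (0 : ℝ), (Iio R).indicator
          (fun r ↦ ENNReal.ofReal (r ^ (finrank ℝ E - 1)) * ENNReal.ofReal r ^ s) r := by
        rw [lintegral_fun_norm_addHaar μ (Measurable.indicator (by fun_prop) measurableSet_Iio)]
        simp only [indicator_mul_right]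
    _ = finrank ℝ E * μ (ball 0 1) *
          ∫⁻ r in Ioo 0 R, ENNReal.ofReal (r ^ (finrank ℝ E + s - 1)) := by
        rw [setLIntegral_indicator measurableSet_Iio, Iio_inter_Ioi,
          setLIntegral_congr_fun measurableSet_Ioo hpow]
    _ = _ := by rw [setLIntegral_Ioo_ofReal_rpow (by linarith) hR, sub_add_cancel]

end Radial

section Line

variable {E : Type*} [NormedAddCommGroup E] [InnerProductSpace ℝ E] [FiniteDimensional ℝ E]
  [MeasurableSpace E] [BorelSpace E] {v : E}

theorem measurePreserving_smul_normalize_add_coe (hv : v ≠ 0) :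
    MeasurePreserving fun q : ℝ × (ℝ ∙ v)ᗮ ↦ q.1 • normalize v + (q.2 : E) := by
  have hspan : (ℝ ∙ normalize v) = (ℝ ∙ v) :=
    Submodule.span_singleton_smul_eq (IsUnit.mk0 _ (inv_ne_zero (norm_ne_zero_iff.2 hv))) v
  let line : ℝ ≃ₗᵢ[ℝ] (ℝ ∙ v) :=
    (LinearIsometryEquiv.toSpanUnitSingleton _ (norm_normalize hv)).trans
      (LinearIsometryEquiv.ofEq _ _ hspan)
  let e : WithLp 2 (ℝ × (ℝ ∙ v)ᗮ) ≃ₗᵢ[ℝ] E :=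
    (LinearIsometryEquiv.withLpProdCongr 2 line (.refl ℝ _)).trans
      (ℝ ∙ v).orthogonalDecomposition.symm
  have h := e.measurePreserving.comp (WithLp.volume_preserving_toLp ℝ (ℝ ∙ v)ᗮ)
  exact h

theorem lintegral_orthogonal_lintegral_smul_normalize_add (hv : v ≠ 0) {f : E → ℝ≥0∞}
    (hf : Measurable f) :
    ∫⁻ y : (ℝ ∙ v)ᗮ, ∫⁻ s : ℝ, f (s • normalize v + y) = ∫⁻ z, f z := by
  rw [← (measurePreserving_smul_normalize_add_coe hv).lintegral_comp hf, Measure.volume_eq_prod,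
    lintegral_prod_symm _ (by fun_prop)]

theorem setLIntegral_disc_setLIntegral_segment_le_ball (hv : v ≠ 0) (R : ℝ) {f : E → ℝ≥0∞}
    (hf : Measurable f) :
    ∫⁻ y in {y : (ℝ ∙ v)ᗮ | ‖y‖ < R}, ∫⁻ t in Ioc 0 (2 * R),
        f (R • normalize v + y - t • normalize v) ≤ ∫⁻ z in ball 0 (2 * R), f z := by
  set u := normalize v
  have hu : ‖u‖ = 1 := norm_normalize hv
  have hmem : ∀ y : (ℝ ∙ v)ᗮ, ‖y‖ < R → ∀ t ∈ Ioc 0 (2 * R),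
      (R - t) • u + (y : E) ∈ ball 0 (2 * R) := by
    intro y hy t ⟨ht0, ht⟩
    have hline : ‖(R - t) • u‖ ≤ R := by
      rw [norm_smul, hu, mul_one, Real.norm_eq_abs, abs_le]
      constructor <;> linarith
    rw [mem_ball_zero_iff]
    calc ‖(R - t) • u + (y : E)‖ ≤ ‖(R - t) • u‖ + ‖y‖ := norm_add_le _ _
      _ < 2 * R := by linarith
  have hsegment : ∀ y : (ℝ ∙ v)ᗮ, ‖y‖ < R → ∫⁻ t in Ioc 0 (2 * R), f (R • u + y - t • u) ≤
      ∫⁻ s : ℝ, (ball 0 (2 * R)).indicator f (s • u + y) := fun y hy ↦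
    calc ∫⁻ t in Ioc 0 (2 * R), f (R • u + y - t • u)
        = ∫⁻ t in Ioc 0 (2 * R), (ball 0 (2 * R)).indicator f ((R - t) • u + y) := by
          refine setLIntegral_congr_fun measurableSet_Ioc fun t ht ↦ ?_
          rw [indicator_of_mem (hmem y hy t ht), sub_smul, sub_add_eq_add_sub]
      _ ≤ ∫⁻ t : ℝ, (ball 0 (2 * R)).indicator f ((R - t) • u + y) := setLIntegral_le_lintegral _ _
      _ = _ := lintegral_sub_left_eq_self (fun s ↦ (ball 0 (2 * R)).indicator f (s • u + y)) R
  calc _ ≤ ∫⁻ y in {y : (ℝ ∙ v)ᗮ | ‖y‖ < R}, ∫⁻ s, (ball 0 (2 * R)).indicator f (s • u + y) :=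
        setLIntegral_mono' (measurableSet_lt measurable_norm measurable_const) hsegment
    _ ≤ ∫⁻ y : (ℝ ∙ v)ᗮ, ∫⁻ s, (ball 0 (2 * R)).indicator f (s • u + y) :=
        setLIntegral_le_lintegral _ _
    _ = ∫⁻ z in ball 0 (2 * R), f z := by
        rw [lintegral_orthogonal_lintegral_smul_normalize_add hv (hf.indicator measurableSet_ball),
          lintegral_indicator measurableSet_ball]

theorem setLIntegral_disc_rpow_setLIntegral_segment_le {a p R : ℝ} (ha : 0 ≤ a) (hp : 1 ≤ p)
    (hap : a * p < finrank ℝ E) (hR : 0 < R) (hv : v ≠ 0) (x : E) :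
    ∫⁻ y in {y : (ℝ ∙ v)ᗮ | ‖y‖ < R}, (∫⁻ t in Ioc 0 (2 * R),
        ‖R • normalize v + y - x - t • normalize v‖ₑ ^ (-a)) ^ p ≤
      ENNReal.ofReal (2 * R) ^ (p - 1) * (finrank ℝ E * volume (ball (0 : E) 1) *
        ENNReal.ofReal ((2 * R) ^ (finrank ℝ E - a * p) / (finrank ℝ E - a * p))) := by
  have : Nontrivial E := ⟨v, 0, hv⟩
  set u := normalize v
  have hholder : ∀ y : (ℝ ∙ v)ᗮ,
      (∫⁻ t in Ioc 0 (2 * R), ‖R • u + y - x - t • u‖ₑ ^ (-a)) ^ p ≤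
        ENNReal.ofReal (2 * R) ^ (p - 1) *
          ∫⁻ t in Ioc 0 (2 * R), ‖R • u + y - t • u - x‖ₑ ^ (-(a * p)) := by
    intro y
    have h := rpow_lintegral_le_measure_univ_rpow_mul_lintegral_rpow
      (μ := volume.restrict (Ioc 0 (2 * R))) hp
      (f := fun t ↦ ‖R • u + y - x - t • u‖ₑ ^ (-a)) (by fun_prop)
    simpa [← ENNReal.rpow_mul, sub_right_comm] using h
  calc _ ≤ ∫⁻ y in {y : (ℝ ∙ v)ᗮ | ‖y‖ < R}, ENNReal.ofReal (2 * R) ^ (p - 1) *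
          ∫⁻ t in Ioc 0 (2 * R), ‖R • u + y - t • u - x‖ₑ ^ (-(a * p)) := lintegral_mono hholder
    _ = ENNReal.ofReal (2 * R) ^ (p - 1) * ∫⁻ y in {y : (ℝ ∙ v)ᗮ | ‖y‖ < R},
          ∫⁻ t in Ioc 0 (2 * R), ‖R • u + y - t • u - x‖ₑ ^ (-(a * p)) :=
        lintegral_const_mul' _ _ (by finiteness)
    _ ≤ ENNReal.ofReal (2 * R) ^ (p - 1) *
          ∫⁻ z in ball 0 (2 * R), ‖z - x‖ₑ ^ (-(a * p)) := by
        gcongr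
        exact setLIntegral_disc_setLIntegral_segment_le_ball hv R
          (f := fun z ↦ ‖z - x‖ₑ ^ (-(a * p))) (by fun_prop)
    _ ≤ ENNReal.ofReal (2 * R) ^ (p - 1) * ∫⁻ z : E in ball 0 (2 * R), ‖z‖ₑ ^ (-(a * p)) := by
        gcongr _ * ?_
        exact setLIntegral_ball_enorm_sub_rpow_le volume (neg_nonpos.2 (by positivity)) 0 x _
    _ = _ := by
        rw [setLIntegral_ball_enorm_rpow volume (neg_lt_neg hap) (by positivity),
          ← sub_eq_add_neg (finrank ℝ E : ℝ)]

theorem norm_setIntegral_disc_rpow_intervalIntegral_le {a p R : ℝ} (ha : 0 ≤ a) (hp : 1 ≤ p)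
    (hap : a * p < finrank ℝ E) (hR : 0 < R) (hv : v ≠ 0) (x : E) :
    ‖∫ y in {y : (ℝ ∙ v)ᗮ | ‖y‖ < R}, (∫ t in (0 : ℝ)..2 * R,
        ‖R • normalize v + y - x - t • normalize v‖ ^ (-a)) ^ p‖ ≤
      (2 * R) ^ (p - 1) * (finrank ℝ E * volume.real (ball (0 : E) 1) *
        ((2 * R) ^ (finrank ℝ E - a * p) / (finrank ℝ E - a * p))) := by
  have : 0 < finrank ℝ E - a * p := sub_pos.2 hap
  have hsegment : ∀ y : (ℝ ∙ v)ᗮ,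
      ‖(∫ t in (0 : ℝ)..2 * R, ‖R • normalize v + y - x - t • normalize v‖ ^ (-a)) ^ p‖ₑ ≤
        (∫⁻ t in Ioc 0 (2 * R), ‖R • normalize v + y - x - t • normalize v‖ₑ ^ (-a)) ^ p := by
    intro y
    refine (enorm_rpow_le_rpow_enorm _ _).trans ?_
    gcongr
    refine (enorm_intervalIntegral_le_lintegral_enorm (by positivity) _).trans ?_
    gcongr with t
    simpa using enorm_rpow_le_rpow_enorm ‖R • normalize v + y - x - t • normalize v‖ (-a)
  rw [← ENNReal.ofReal_le_ofReal_iff (by positivity), ofReal_norm]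
  calc _ ≤ _ := (enorm_integral_le_lintegral_enorm _).trans (lintegral_mono hsegment)
    _ ≤ _ := setLIntegral_disc_rpow_setLIntegral_segment_le ha hp hap hR hv x
    _ = _ := by
      rw [ENNReal.ofReal_rpow_of_pos (by positivity), ENNReal.ofReal_mul (by positivity),
        ENNReal.ofReal_mul (by positivity), ENNReal.ofReal_mul (by positivity),
        ENNReal.ofReal_natCast, ofReal_measureReal]

end Line

theorem singular_kernel_Lp_bound_general {E : Type*} [NormedAddCommGroup E] [InnerProductSpace ℝ E]
    [FiniteDimensional ℝ E] [MeasurableSpace E] [BorelSpace E] {a p R : ℝ} (ha : 0 ≤ a)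
    (hp : 1 ≤ p) (hap : a * p < finrank ℝ E) (hR : 0 < R) (x : E) {V : Set E}
    (hV : volume V < ∞) (hV0 : ∀ v ∈ V, v ≠ 0) :
    ∫ v in V, ∫ y in {y : (ℝ ∙ v)ᗮ | ‖y‖ < R}, (∫ t in (0 : ℝ)..2 * R,
        ‖R • normalize v + y - x - t • normalize v‖ ^ (-a)) ^ p ≤
      (2 * R) ^ (p - 1) * volume.real V * (finrank ℝ E * volume.real (ball (0 : E) 1)) *
        ((2 * R) ^ (finrank ℝ E - a * p) / (finrank ℝ E - a * p)) := by
  refine (le_abs_self _).trans ((norm_setIntegral_le_of_norm_le_const hV fun v hv ↦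
    norm_setIntegral_disc_rpow_intervalIntegral_le ha hp hap hR (hV0 v hv) x).trans_eq ?_)
  ring

/-- For `n ≥ 2`, `R > 0`, `1 < p < 1 + 1/(n-1)`, every `x'` with `|x'| < 2R`
and every bounded measurable `V_δ ⊆ ℝⁿ \ {0}`:
`∫_{V_δ} ∫_{R v̂ + Π_v(R)} (∫₀^{2R} dt / |x - x' - t v̂|^{n-1})^p dx dv ≤
  (2R)^{p/p'} Vol(V_δ) Vol(S^{n-1}) (4R)^{n-(n-1)p} / (n-(n-1)p)`,
where `1/p + 1/p' = 1` and `Vol(S^{n-1}) = n·Vol(B(0,1))`. -/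
theorem singular_kernel_Lp_bound (n : ℕ) (hn : 2 ≤ n) (R : ℝ) (hR : 0 < R)
    (p p' : ℝ) (hp1 : 1 < p) (hp2 : p < 1 + 1 / (n - 1 : ℝ))
    (hp' : 1 / p + 1 / p' = 1)
    (x' : EuclideanSpace ℝ (Fin n)) (hx' : ‖x'‖ < 2 * R)
    (Vδ : Set (EuclideanSpace ℝ (Fin n))) (hVmeas : MeasurableSet Vδ)
    (hVbd : Bornology.IsBounded Vδ) (hV0 : ∀ v ∈ Vδ, v ≠ 0) :
    (∫ v in Vδ, ∫ y in {y : ↥((ℝ ∙ v)ᗮ) | ‖(y : EuclideanSpace ℝ (Fin n))‖ < R},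
        (∫ t in (0:ℝ)..(2 * R),
            1 / ‖(R • hat v + (y : EuclideanSpace ℝ (Fin n))) - x' - t • hat v‖ ^ (n - 1)) ^ p)
      ≤ (2 * R) ^ (p / p') * (volume Vδ).toReal *
          ((n : ℝ) * (volume (Metric.ball (0 : EuclideanSpace ℝ (Fin n)) 1)).toReal) *
          ((4 * R) ^ ((n : ℝ) - (n - 1 : ℝ) * p) / ((n : ℝ) - (n - 1 : ℝ) * p)) := by
  have hn1 : (1 : ℝ) < n := by exact_mod_cast hn
  have hgap : (n - 1 : ℝ) * p < n := sub_one_mul_lt_of_lt_one_add_one_div hn1 hp2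
  have hconj : p / p' = p - 1 :=
    (Real.holderConjugate_iff.2 ⟨hp1, by simpa using hp'⟩).div_conj_eq_sub_one
  have hradius : (2 * R) ^ ((n : ℝ) - (n - 1) * p) ≤ (4 * R) ^ ((n : ℝ) - (n - 1) * p) :=
    Real.rpow_le_rpow (by positivity) (by linarith) (sub_pos.2 hgap).le
  have h := singular_kernel_Lp_bound_general (sub_nonneg.2 hn1.le) hp1.le (by simpa using hgap) hR
    x' hVbd.measure_lt_top hV0
  simp only [hat_eq_normalize, one_div_pow_pred_eq_rpow_neg (by omega : 0 < n) (norm_nonneg _),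
    hconj]
  simp only [finrank_euclideanSpace_fin, measureReal_def] at h
  refine h.trans ?_
  gcongr
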